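/- If P is an irreducible recurrent stochastic matrix, then for every n ≥ 1 the matrix P^n is recurrent. -/

import Mathlib

/-!
The return probabilities `f m = (P ^ m) i i` are nonnegative and supermultiplicative:
`f a * f b ≤ f (a + b)`. Suppose that `f` is summable over the multiples of `n`. If `f` vanishes on
the residue class of `r` modulo `n`, it is summable there. Otherwise `f k > 0` for some `k ≡ r`, and
`f m * f k ^ (n - 1) ≤ f (m + (n - 1) * k)` for all `m ≡ r`, where `m + (n - 1) * k ≡ n * r ≡ 0`;
comparison with the sum over the multiples of `n` shows that `f` is summable over the class of `r`.
There are finitely many classes, so `f` is summable: the state `i` is transient for `P` as soon as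
it is transient for `P ^ n`.
-/

/-- A stochastic matrix over a countable set `Ω`: nonnegative entries and each row sums to 1. -/
def IsStochastic {Ω : Type*} (P : Ω → Ω → ℝ) : Prop :=
  (∀ i j, 0 ≤ P i j) ∧ ∀ i, HasSum (fun j => P i j) 1

/-- Matrix product over a countable index set. -/
noncomputable def stochMul {Ω : Type*} (P Q : Ω → Ω → ℝ) : Ω → Ω → ℝ :=
  fun i k => ∑' j, P i j * Q j k

-- Matrix powers `P^n`.
open Classical in
noncomputable def stochPow {Ω : Type*} (P : Ω → Ω → ℝ) : ℕ → Ω → Ω → ℝ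
  | 0 => fun i j => if i = j then 1 else 0
  | n + 1 => stochMul (stochPow P n) P

/-- `i` leads to `j`: there is a path (possibly of length 0) from `i` to `j`,
i.e. `(P^n)_{ij} > 0` for some `n ≥ 0`. -/
def LeadsTo {Ω : Type*} (P : Ω → Ω → ℝ) (i j : Ω) : Prop :=
  ∃ n : ℕ, 0 < stochPow P n i j

/-- `i` and `j` communicate: each leads to the other. -/
def Communicates {Ω : Type*} (P : Ω → Ω → ℝ) (i j : Ω) : Prop :=
  LeadsTo P i j ∧ LeadsTo P j i

/-- `P` is irreducible: every pair of states communicates. -/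
def StochIrreducible {Ω : Type*} (P : Ω → Ω → ℝ) : Prop :=
  ∀ i j : Ω, Communicates P i j

/-- A state `i` is recurrent when `∑_n (P^n)_{ii} = ∞`, i.e. the series is not summable
(the entries being nonnegative). -/
def IsRecurrentState {Ω : Type*} (P : Ω → Ω → ℝ) (i : Ω) : Prop :=
  ¬ Summable (fun n : ℕ => stochPow P n i i)

/-- `P` is recurrent when every state is recurrent. -/
def IsRecurrent {Ω : Type*} (P : Ω → Ω → ℝ) : Prop :=
  ∀ i : Ω, IsRecurrentState P i

/-- `d` is the greatest common divisor of the set `S ⊆ ℕ`. -/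
def IsGCDOf (d : ℕ) (S : Set ℕ) : Prop :=
  (∀ n ∈ S, d ∣ n) ∧ ∀ e : ℕ, (∀ n ∈ S, e ∣ n) → e ∣ d

lemma summable_of_forall_summable_residue {R : Type*} [AddCommGroup R] [TopologicalSpace R]
    [IsTopologicalAddGroup R] {n : ℕ} [NeZero n] {f : ℕ → R}
    (h : ∀ r < n, Summable fun m => f (n * m + r)) : Summable f := by
  rw [Finset.sum_indicator_mod n f, Finset.sum_fn]
  refine summable_sum fun a _ => ?_
  rw [← ZMod.natCast_zmod_val a, summable_indicator_mod_iff_summable]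
  exact h a.val a.val_lt

/-- Supermultiplicative functions, the multiplicative counterpart of superadditive ones. The return
probabilities of a Markov chain are the example of interest. -/
def IsSupermultiplicative {M R : Type*} [Add M] [Mul R] [LE R] (f : M → R) : Prop :=
  ∀ a b, f a * f b ≤ f (a + b)

namespace IsSupermultiplicative

lemma mul_pow_le_add_nsmul {M R : Type*} [AddMonoid M] [MonoidWithZero R] [Preorder R]
    [MulPosMono R] {f : M → R} (hf : IsSupermultiplicative f) {k : M} (hk : 0 ≤ f k) (m : M)
    (t : ℕ) : f m * f k ^ t ≤ f (m + t • k) := by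
  induction t with
  | zero => simp
  | succ t ih =>
    calc f m * f k ^ (t + 1) = f m * f k ^ t * f k := by rw [pow_succ, mul_assoc]
      _ ≤ f (m + t • k) * f k := mul_le_mul_of_nonneg_right ih hk
      _ ≤ f (m + t • k + k) := hf _ _
      _ = f (m + (t + 1) • k) := by rw [succ_nsmul, add_assoc]

variable {f : ℕ → ℝ} {n : ℕ}

lemma summable_residue_of_summable_multiples (hf : IsSupermultiplicative f) (hf₀ : ∀ m, 0 ≤ f m)
    (hn : n ≠ 0) (hs : Summable fun m => f (n * m)) (r : ℕ) :
    Summable fun m => f (n * m + r) := by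
  by_cases hr : ∀ m, f (n * m + r) = 0
  · simpa only [hr] using summable_zero
  obtain ⟨q, hq⟩ := not_forall.1 hr
  have hc : 0 < f (n * q + r) ^ (n - 1) := pow_pos ((hf₀ _).lt_of_ne' hq) _
  have hindex (m : ℕ) : n * m + r + (n - 1) • (n * q + r) = n * (m + ((n - 1) * q + r)) := by
    obtain ⟨t, rfl⟩ := Nat.exists_eq_succ_of_ne_zero hn
    simp only [Nat.succ_eq_add_one, Nat.add_sub_cancel, smul_eq_mul]
    ring
  have hle (m : ℕ) :
      f (n * m + r) * f (n * q + r) ^ (n - 1) ≤ f (n * (m + ((n - 1) * q + r))) :=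
    hindex m ▸ hf.mul_pow_le_add_nsmul (hf₀ _) _ _
  have hshift : Summable fun m => f (n * (m + ((n - 1) * q + r))) :=
    (summable_nat_add_iff (f := fun m => f (n * m)) _).2 hs
  exact (summable_mul_right_iff hc.ne').1 <|
    hshift.of_nonneg_of_le (fun m => mul_nonneg (hf₀ _) hc.le) hle

lemma summable_multiples_iff (hf : IsSupermultiplicative f) (hf₀ : ∀ m, 0 ≤ f m) (hn : n ≠ 0) :
    (Summable fun m => f (n * m)) ↔ Summable f := by
  have : NeZero n := ⟨hn⟩
  exact ⟨fun hs => summable_of_forall_summable_residue fun r _ =>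
      hf.summable_residue_of_summable_multiples hf₀ hn hs r,
    fun hs => hs.comp_injective (mul_right_injective₀ hn)⟩

end IsSupermultiplicative

lemma stochMul_stochPow_zero {Ω : Type*} (A P : Ω → Ω → ℝ) : stochMul A (stochPow P 0) = A := by
  funext i k
  simp [stochMul, stochPow]

namespace IsStochastic

variable {Ω : Type*} {A B C P : Ω → Ω → ℝ}

lemma le_one (hP : IsStochastic P) (i j : Ω) : P i j ≤ 1 :=
  le_hasSum (hP.2 i) j fun k _ => hP.1 i k

lemma hasSum_prod_mul (hA : IsStochastic A) (hB : IsStochastic B) (i : Ω) :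
    HasSum (fun p : Ω × Ω => A i p.1 * B p.1 p.2) 1 := by
  have hrow (j : Ω) : HasSum (fun k => A i j * B j k) (A i j) := by
    simpa only [mul_one] using (hB.2 j).mul_left (A i j)
  have hs : Summable fun p : Ω × Ω => A i p.1 * B p.1 p.2 := by
    refine (summable_prod_of_nonneg fun p => mul_nonneg (hA.1 _ _) (hB.1 _ _)).2
      ⟨fun j => (hrow j).summable, ?_⟩
    simpa only [(hrow _).tsum_eq] using (hA.2 i).summable
  exact (hs.hasSum.prod_fiberwise hrow).unique (hA.2 i) ▸ hs.hasSum

lemma summable_mul (hA : IsStochastic A) (hB : IsStochastic B) (i k : Ω) :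
    Summable fun j => A i j * B j k :=
  (hA.hasSum_prod_mul hB i).summable.comp_injective (Prod.mk_left_injective k)

protected lemma stochMul (hA : IsStochastic A) (hB : IsStochastic B) :
    IsStochastic (stochMul A B) :=
  ⟨fun _ _ => tsum_nonneg fun _ => mul_nonneg (hA.1 _ _) (hB.1 _ _), fun i =>
    ((Equiv.prodComm Ω Ω).hasSum_iff.2 (hA.hasSum_prod_mul hB i)).prod_fiberwise fun k =>
      (hA.summable_mul hB i k).hasSum⟩

lemma stochMul_assoc (hA : IsStochastic A) (hB : IsStochastic B) (hC : IsStochastic C) :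
    stochMul (stochMul A B) C = stochMul A (stochMul B C) := by
  funext i l
  have hs : Summable fun p : Ω × Ω => A i p.1 * B p.1 p.2 * C p.2 l :=
    (hA.hasSum_prod_mul hB i).summable.of_nonneg_of_le
      (fun p => mul_nonneg (mul_nonneg (hA.1 _ _) (hB.1 _ _)) (hC.1 _ _))
      fun p => mul_le_of_le_one_right (mul_nonneg (hA.1 _ _) (hB.1 _ _)) (hC.le_one _ _)
  calc ∑' k, (∑' j, A i j * B j k) * C k l
      = ∑' k, ∑' j, A i j * B j k * C k l := by simp only [tsum_mul_right]
    _ = ∑' j, ∑' k, A i j * B j k * C k l := hs.tsum_comm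
    _ = ∑' j, A i j * ∑' k, B j k * C k l := by simp only [mul_assoc, tsum_mul_left]

protected lemma stochPow (hP : IsStochastic P) (n : ℕ) : IsStochastic (stochPow P n) := by
  induction n with
  | zero =>
    classical
    refine ⟨fun i j => ?_, fun i => ?_⟩
    · unfold stochPow
      positivity
    · simpa only [stochPow, eq_comm] using hasSum_ite_eq i (1 : ℝ)
  | succ n ih => exact ih.stochMul hP

lemma stochPow_add (hP : IsStochastic P) (a b : ℕ) :
    stochPow P (a + b) = stochMul (stochPow P a) (stochPow P b) := by
  induction b with
  | zero => exact (stochMul_stochPow_zero _ P).symm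
  | succ b ih =>
    calc stochMul (stochPow P (a + b)) P
        = stochMul (stochMul (stochPow P a) (stochPow P b)) P := by rw [ih]
      _ = stochMul (stochPow P a) (stochMul (stochPow P b) P) :=
        (hP.stochPow a).stochMul_assoc (hP.stochPow b) hP

lemma stochPow_stochPow (hP : IsStochastic P) (n m : ℕ) :
    stochPow (stochPow P n) m = stochPow P (n * m) := by
  induction m with
  | zero => rfl
  | succ m ih =>
    calc stochMul (stochPow (stochPow P n) m) (stochPow P n)
        = stochMul (stochPow P (n * m)) (stochPow P n) := by rw [ih]
      _ = stochPow P (n * (m + 1)) := (hP.stochPow_add (n * m) n).symm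

lemma stochPow_mul_stochPow_le (hP : IsStochastic P) (a b : ℕ) (i j k : Ω) :
    stochPow P a i j * stochPow P b j k ≤ stochPow P (a + b) i k := by
  have ha := hP.stochPow a
  have hb := hP.stochPow b
  rw [hP.stochPow_add]
  exact (ha.summable_mul hb i k).le_tsum j fun _ _ => mul_nonneg (ha.1 _ _) (hb.1 _ _)

lemma isSupermultiplicative_stochPow_self (hP : IsStochastic P) (i : Ω) :
    IsSupermultiplicative fun m => stochPow P m i i :=
  fun a b => hP.stochPow_mul_stochPow_le a b i i i

end IsStochastic

theorem pow_of_irreducible_recurrent_is_recurrent_general {Ω : Type*} {P : Ω → Ω → ℝ}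
    (hP : IsStochastic P) (i : Ω) {n : ℕ} (hn : n ≠ 0) :
    IsRecurrentState (stochPow P n) i ↔ IsRecurrentState P i := by
  simp only [IsRecurrentState, hP.stochPow_stochPow]
  exact not_congr <| (hP.isSupermultiplicative_stochPow_self i).summable_multiples_iff
    (fun m => (hP.stochPow m).1 i i) hn

/-- if `P` is irreducible and recurrent then every power `P^n` (`n ≥ 1`)
is recurrent. -/
theorem pow_of_irreducible_recurrent_is_recurrent {Ω : Type*} [Countable Ω] {P : Ω → Ω → ℝ}
    (hP : IsStochastic P) (hirr : StochIrreducible P) (hrec : IsRecurrent P) :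
    ∀ n : ℕ, 1 ≤ n → IsRecurrent (stochPow P n) :=
  fun _ hn i =>
    (pow_of_irreducible_recurrent_is_recurrent_general hP i (Nat.one_le_iff_ne_zero.1 hn)).2
      (hrec i)
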